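/- Let (W,S) be a Coxeter group and w ∈ W. In the edge-colored directed graph R(w) of reduced expressions for w with arcs given by braid moves colored by conjugacy classes [(s,t)], let C be any directed cycle and c = [(s,t)] any color with opposite c^op = [(t,s)]. Then the total number of arcs of C whose color lies in {c, c^op} is even. In particular, every directed cycle of R(w) has even length. -/

import Mathlib

open scoped Classical

/-- The word `(s, t, s, t, …)` with `m` letters. -/
def altList {α : Type*} (s t : α) (m : ℕ) : List α :=
  (List.range m).map (fun k => if k % 2 = 0 then s else t)

/-- `b` is obtained from `a` by an `(s_i, s_j)`-braid move. -/
def IsBraidMove {B W : Type*} [Group W] {M : CoxeterMatrix B}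
    (cs : CoxeterSystem M W) (i j : B) (a b : List B) : Prop :=
  i ≠ j ∧ M.M i j ≠ 0 ∧
  ∃ p : ℕ, p + M.M i j ≤ a.length ∧
    a = a.take p ++ altList i j (M.M i j) ++ a.drop (p + M.M i j) ∧
    b = a.take p ++ altList j i (M.M i j) ++ a.drop (p + M.M i j)

/-- Simultaneous conjugacy of pairs of simple reflections. -/
def SimConj {B W : Type*} [Group W] {M : CoxeterMatrix B}
    (cs : CoxeterSystem M W) (p p' : B × B) : Prop :=
  ∃ q : W, q * cs.simple p.1 * q⁻¹ = cs.simple p'.1 ∧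
    q * cs.simple p.2 * q⁻¹ = cs.simple p'.2

/-!
A braid move reverses, in the sequence of left inversions of a word, one block, and the entries of
this block are the reflections of a conjugate `D` of the dihedral parabolic subgroup generated by
the two letters of the move. Hence, for reflections `u ≠ v`, the number of occurrences of `u` before
`v` changes its parity exactly when `u, v ∈ D`. By Kilmoyer's theorem on intersections of parabolic
subgroups, two such subgroups that share two reflections are equal and their colors agree up to
passing to the opposite. So for every `D`, choosing two reflections `u ≠ v` in it, the moves of a
cycle that belong to `D` are exactly those which change the parity attached to `(u, v)`; since this
parity returns to its initial value, their number is even. Summing over all `D` of a given pair of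
opposite colors gives the result.

Kilmoyer's theorem is obtained from the parity of the number of occurrences of a reflection among
the inversions of a word, which depends only on the group element; that the block of a braid move
contains each reflection of `D` just once is read off the geometric representation.
-/

section PairCount

variable {α : Type*} [DecidableEq α] {u v : α}

/-- The number of pairs of positions `p < q` of a list at which the entries `u` and `v`, in this
order, stand. Repeated entries are allowed, so that the count also makes sense for the inversion
sequence of a word that is not reduced. -/
def pairCount (u v : α) : List α → ℕ
  | [] => 0
  | x :: L => (if x = u then L.count v else 0) + pairCount u v L

theorem pairCount_append (L L' : List α) :
    pairCount u v (L ++ L') = pairCount u v L + pairCount u v L' + L.count u * L'.count v := by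
  induction L with
  | nil => simp [pairCount]
  | cons x L ih =>
    simp only [List.cons_append, pairCount, ih, List.count_append, List.count_cons, beq_iff_eq]
    split_ifs <;> ring

theorem pairCount_add_pairCount_reverse (huv : u ≠ v) (L : List α) :
    pairCount u v L + pairCount u v L.reverse = L.count u * L.count v := by
  induction L with
  | nil => simp [pairCount]
  | cons x L ih =>
    simp only [List.reverse_cons, pairCount_append, pairCount, List.count_nil, List.count_reverse,
      List.count_cons, beq_iff_eq]
    by_cases hxu : x = u
    · simp only [hxu, huv, if_true, if_false]
      linarith
    · simp only [hxu, if_false]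
      split_ifs <;> linarith

theorem pairCount_append_reverse_append (huv : u ≠ v) (A F C : List α) :
    (pairCount u v (A ++ F.reverse ++ C) : ZMod 2) =
      pairCount u v (A ++ F ++ C) + (F.count u * F.count v : ℕ) := by
  rw [← pairCount_add_pairCount_reverse huv F]
  simp only [pairCount_append, List.count_append, List.count_reverse]
  push_cast
  linear_combination -CharTwo.add_self_eq_zero (pairCount u v F : ZMod 2)

end PairCount

section FiberCount

theorem even_card_filter_of_even_card_fibers {ι κ : Type*} (s : Finset ι) (D : ι → κ)
    (hD : ∀ n ∈ s, Even (s.filter (fun m => D m = D n)).card)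
    (Q : ι → Prop) [DecidablePred Q] (hQ : ∀ m ∈ s, ∀ n ∈ s, D m = D n → Q n → Q m) :
    Even (s.filter Q).card := by
  rw [Finset.card_eq_sum_card_image D]
  refine Finset.even_sum _ fun E hE => ?_
  obtain ⟨n, hn, rfl⟩ := Finset.mem_image.1 hE
  obtain ⟨hns, hQn⟩ := Finset.mem_filter.1 hn
  have hfiber : (s.filter Q).filter (fun m => D m = D n) = s.filter (fun m => D m = D n) := by
    rw [Finset.filter_filter]
    exact Finset.filter_congr fun m hm => ⟨And.right, fun h => ⟨hQ m hm n hns h hQn, h⟩⟩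
  rw [hfiber]
  exact hD n hns

theorem even_card_filter_of_telescope {k : ℕ} {a : ℕ → ZMod 2} {P : ℕ → Prop}
    [DecidablePred P] (ha : ∀ n < k, a (n + 1) = a n + if P n then 1 else 0) (hcyc : a k = a 0) :
    Even ((Finset.range k).filter P).card := by
  rw [← ZMod.natCast_eq_zero_iff_even, Finset.natCast_card_filter]
  calc ∑ n ∈ Finset.range k, (if P n then 1 else 0 : ZMod 2)
      = ∑ n ∈ Finset.range k, (a (n + 1) - a n) :=
        Finset.sum_congr rfl fun n hn => by rw [ha n (Finset.mem_range.1 hn), add_sub_cancel_left]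
    _ = 0 := by rw [Finset.sum_range_sub, hcyc, sub_self]

end FiberCount

section GeometricRepresentation

open Module Real

theorem sin_pi_div_pos {m : ℕ} (hm : 2 ≤ m) : 0 < sin (π / m) :=
  sin_pos_of_pos_of_lt_pi (by positivity) (div_lt_self pi_pos (by exact_mod_cast hm))

section TwoReflections

variable {V : Type*} [AddCommGroup V] [Module ℝ V] {x y : V} {f g : Dual ℝ V}
  (hf : f x = 2) (hg : g y = 2) {φ : ℝ}

theorem sin_smul_reflection_mul_reflection_pow_apply (hfy : f y = -2 * cos φ)
    (hgx : g x = -2 * cos φ) (k : ℕ) :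
    sin φ • ((reflection hf * reflection hg) ^ k) x =
      sin ((2 * k + 1) * φ) • x + sin (2 * k * φ) • y := by
  have hsin (a : ℝ) : sin (a + φ + φ) = 2 * cos φ * sin (a + φ) - sin a := by
    have h := sin_sub (a + φ) φ
    rw [add_sub_cancel_right] at h
    rw [sin_add (a + φ), h]
    ring
  induction k with
  | zero => simp
  | succ k ih =>
    have hodd := hsin (2 * k * φ)
    have heven := hsin ((2 * k + 1) * φ)
    rw [pow_succ', LinearEquiv.mul_apply, ← map_smul, ih, LinearEquiv.mul_apply]
    simp only [reflection_apply, map_add, map_sub, map_smul, hf, hg, hfy, hgx]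
    match_scalars
    · ring_nf at hodd heven ⊢
      linear_combination -heven - 2 * cos φ * hodd
    · ring_nf at hodd heven ⊢
      linear_combination -hodd

theorem reflection_mul_reflection_pow_apply_left {m : ℕ} (hm : 2 ≤ m)
    (hfy : f y = -2 * cos (π / m)) (hgx : g x = -2 * cos (π / m)) :
    ((reflection hf * reflection hg) ^ m) x = x := by
  have hm0 : (m : ℝ) ≠ 0 := by positivity
  refine smul_right_injective V (sin_pi_div_pos hm).ne' ?_
  have hodd : (2 * m + 1) * (π / m) = π / m + 2 * π := by field_simp; ring
  have heven : 2 * m * (π / m) = 2 * π := by field_simp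
  simpa only [hodd, heven, sin_add_two_pi, sin_two_pi, zero_smul, add_zero] using
    sin_smul_reflection_mul_reflection_pow_apply hf hg hfy hgx m

theorem reflection_mul_reflection_pow_apply_right {m : ℕ} (hm : 2 ≤ m)
    (hfy : f y = -2 * cos (π / m)) (hgx : g x = -2 * cos (π / m)) :
    ((reflection hf * reflection hg) ^ m) y = y := by
  have hinv : (reflection hf * reflection hg) ^ m = ((reflection hg * reflection hf) ^ m)⁻¹ := by
    rw [← inv_pow, mul_inv_rev, reflection_inv, reflection_inv]
  rw [hinv]
  exact (LinearEquiv.symm_apply_eq _).2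
    (reflection_mul_reflection_pow_apply_left hg hf hm hgx hfy).symm

theorem reflection_mul_reflection_pow_eq_one {m : ℕ} (hm : 2 ≤ m)
    (hfy : f y = -2 * cos (π / m)) (hgx : g x = -2 * cos (π / m)) :
    (reflection hf * reflection hg) ^ m = 1 := by
  have hsin : sin (π / m) ≠ 0 := (sin_pi_div_pos hm).ne'
  ext z
  -- Split off the component `z₀` of `z` in the common kernel of `f` and `g`, which both reflections
  -- fix.
  set a := (f z + cos (π / m) * g z) / (2 * sin (π / m) ^ 2) with ha
  set b := (g z + cos (π / m) * f z) / (2 * sin (π / m) ^ 2) with hb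
  obtain ⟨z₀, hz₀⟩ : ∃ z₀, z₀ = z - a • x - b • y := ⟨_, rfl⟩
  have hz : z = z₀ + a • x + b • y := by rw [hz₀]; abel
  have hf₀ : f z₀ = 0 := by
    simp only [hz₀, map_sub, map_smul, smul_eq_mul, hf, hfy, ha, hb]
    field_simp
    linear_combination f z * sin_sq_add_cos_sq (π / m)
  have hg₀ : g z₀ = 0 := by
    simp only [hz₀, map_sub, map_smul, smul_eq_mul, hg, hgx, ha, hb]
    field_simp
    linear_combination g z * sin_sq_add_cos_sq (π / m)
  have hfix : ((reflection hf * reflection hg) ^ m) z₀ = z₀ := by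
    have h : (reflection hf * reflection hg) z₀ = z₀ := by
      simp [reflection_apply, hf₀, hg₀]
    rw [LinearEquiv.coe_pow]
    exact Function.iterate_fixed h m
  rw [LinearEquiv.coe_one, id, hz, map_add, map_add, map_smul, map_smul, hfix,
    reflection_mul_reflection_pow_apply_left hf hg hm hfy hgx,
    reflection_mul_reflection_pow_apply_right hf hg hm hfy hgx]

theorem dvd_of_reflection_mul_reflection_pow_eq_one {m k : ℕ} (hm : 2 ≤ m)
    (hxy : LinearIndependent ℝ ![x, y]) (hfy : f y = -2 * cos (π / m))
    (hgx : g x = -2 * cos (π / m)) (hk : (reflection hf * reflection hg) ^ k = 1) : m ∣ k := by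
  have hx := sin_smul_reflection_mul_reflection_pow_apply hf hg hfy hgx k
  rw [hk, LinearEquiv.coe_one, id] at hx
  obtain ⟨hodd, hsin⟩ := LinearIndependent.pair_iff.1 hxy
    (sin ((2 * k + 1) * (π / m)) - sin (π / m)) (sin (2 * k * (π / m))) (by
      rw [sub_smul, hx]
      abel)
  have hcos : cos (2 * k * (π / m)) = 1 := by
    rw [sub_eq_zero, add_mul, one_mul, sin_add, hsin, zero_mul, zero_add] at hodd
    exact mul_right_cancel₀ (sin_pi_div_pos hm).ne' (hodd.trans (one_mul _).symm)
  obtain ⟨n, hn⟩ := (cos_eq_one_iff _).1 hcos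
  have hkn : (k : ℝ) = m * n := by
    field_simp at hn
    linarith
  exact Int.natCast_dvd_natCast.1 ⟨n, by exact_mod_cast hkn⟩

end TwoReflections

section CoxeterMatrix

variable {B : Type*} (M : CoxeterMatrix B)

/-- The coordinate form `2 B(e_i, ·)` on `ℝ^(B)` of Tits' geometric representation. If `M i k = 0`,
standing for `∞`, then `π / 0 = 0` gives the customary value `-2`. -/
noncomputable def simpleCoroot (i : B) : Dual ℝ (B →₀ ℝ) :=
  Finsupp.linearCombination ℝ fun k => -2 * cos (π / M i k)

theorem simpleCoroot_single (i k : B) :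
    simpleCoroot M i (Finsupp.single k 1) = -2 * cos (π / M i k) := by
  simp [simpleCoroot]

theorem simpleCoroot_single_self (i : B) : simpleCoroot M i (Finsupp.single i 1) = 2 := by
  simp [simpleCoroot_single]

/-- The action of the simple reflection with index `i` in Tits' geometric representation. -/
noncomputable def geometricReflection (i : B) : (B →₀ ℝ) ≃ₗ[ℝ] (B →₀ ℝ) :=
  reflection (simpleCoroot_single_self M i)

theorem isLiftable_geometricReflection : M.IsLiftable (geometricReflection M) := by
  intro i j
  rcases eq_or_ne i j with rfl | hij
  · rw [M.diagonal, pow_one]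
    exact mul_eq_one_iff_eq_inv.2 (reflection_inv _).symm
  · rcases eq_or_ne (M i j) 0 with h0 | h0
    · rw [h0, pow_zero]
    · exact reflection_mul_reflection_pow_eq_one _ _
        ((Nat.two_le_iff _).2 ⟨h0, M.off_diagonal i j hij⟩) (simpleCoroot_single M i j)
        (by rw [simpleCoroot_single, M.symmetric])

variable {M}

theorem orderOf_simple_mul_simple {W : Type*} [Group W] (cs : CoxeterSystem M W) {i j : B}
    (hm : M i j ≠ 0) : orderOf (cs.simple i * cs.simple j) = M i j := by
  rcases eq_or_ne i j with rfl | hij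
  · simp
  have hm2 : 2 ≤ M i j := (Nat.two_le_iff _).2 ⟨hm, M.off_diagonal i j hij⟩
  refine Nat.dvd_antisymm (orderOf_dvd_of_pow_eq_one (cs.simple_mul_simple_pow i j)) ?_
  have hpow := congrArg (cs.lift ⟨_, isLiftable_geometricReflection M⟩)
    (pow_orderOf_eq_one (cs.simple i * cs.simple j))
  rw [map_pow, map_mul, cs.lift_apply_simple, cs.lift_apply_simple, map_one] at hpow
  refine dvd_of_reflection_mul_reflection_pow_eq_one _ _ hm2
    (LinearIndependent.pair_iff.2 fun a b hab => ?_) (simpleCoroot_single M i j)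
    (by rw [simpleCoroot_single, M.symmetric]) hpow
  exact ⟨by simpa [hij] using DFunLike.congr_fun hab i,
    by simpa [hij.symm] using DFunLike.congr_fun hab j⟩

end CoxeterMatrix

end GeometricRepresentation

section AlternatingWords

theorem altList_succ {α : Type*} (s t : α) (m : ℕ) :
    altList s t (m + 1) = s :: altList t s m := by
  simp only [altList, List.range_succ_eq_map, List.map_cons, List.map_map]
  refine congrArg₂ _ (by simp) (List.map_congr_left fun k _ => ?_)
  rcases Nat.mod_two_eq_zero_or_one k with hk | hk <;> simp [Nat.add_mod, hk]

theorem altList_eq_reverse_alternatingWord {B : Type*} (i j : B) (m : ℕ) :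
    altList i j m = (CoxeterSystem.alternatingWord j i m).reverse := by
  induction m generalizing i j with
  | zero => rfl
  | succ m ih => simp [altList_succ, CoxeterSystem.alternatingWord_succ, ih]

theorem mem_pair_of_mem_altList {α : Type*} {s t x : α} {m : ℕ} (hx : x ∈ altList s t m) :
    x ∈ ({s, t} : Set α) := by
  obtain ⟨k, -, rfl⟩ := List.mem_map.1 hx
  split_ifs <;> simp

theorem prod_map_altList_two_mul {α G : Type*} [Monoid G] (r : α → G) (s t : α) (m : ℕ) :
    ((altList s t (2 * m)).map r).prod = (r s * r t) ^ m := by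
  induction m with
  | zero => simp [altList]
  | succ m ih =>
    rw [Nat.mul_succ, altList_succ, altList_succ]
    simp [ih, pow_succ', mul_assoc]

variable {B W : Type*} [Group W] {M : CoxeterMatrix B} (cs : CoxeterSystem M W)

theorem leftInvSeq_append (ω ω' : List B) :
    cs.leftInvSeq (ω ++ ω') =
      cs.leftInvSeq ω ++ (cs.leftInvSeq ω').map (MulAut.conj (cs.wordProd ω)) := by
  induction ω with
  | nil => simp
  | cons i ω ih =>
    simp [CoxeterSystem.leftInvSeq, ih, cs.wordProd_cons, Function.comp_def, mul_assoc]

theorem leftInvSeq_altList (i j : B) (m : ℕ) :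
    cs.leftInvSeq (altList i j m) =
      (List.range m).map fun k => (cs.simple i * cs.simple j) ^ k * cs.simple i := by
  induction m generalizing i j with
  | zero => simp [altList]
  | succ m ih =>
    rw [altList_succ, CoxeterSystem.leftInvSeq, ih, List.range_succ_eq_map, List.map_cons,
      List.map_map, List.map_map, pow_zero, one_mul]
    refine congrArg _ (List.map_congr_left fun k _ => ?_)
    have hpow : cs.simple i * (cs.simple j * cs.simple i) ^ k =
        (cs.simple i * cs.simple j) ^ k * cs.simple i :=
      SemiconjBy.pow_right (a := cs.simple i) (mul_assoc _ _ _).symm k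
    simp [pow_succ, ← mul_assoc, hpow]

theorem leftInvSeq_altList_swap (i j : B) :
    cs.leftInvSeq (altList j i (M i j)) = (cs.leftInvSeq (altList i j (M i j))).reverse := by
  rw [leftInvSeq_altList, leftInvSeq_altList]
  refine List.ext_getElem (by simp) fun k hk _ => ?_
  rw [List.length_map, List.length_range] at hk
  have hkm : M i j - 1 - k + (k + 1) = M i j := by omega
  have hinv : (cs.simple i * cs.simple j) ^ (M i j - 1 - k) =
      (cs.simple j * cs.simple i) ^ (k + 1) := by
    have h : (cs.simple i * cs.simple j) ^ (M i j - 1 - k) *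
        (cs.simple i * cs.simple j) ^ (k + 1) = 1 := by
      rw [← pow_add, hkm, cs.simple_mul_simple_pow]
    rw [eq_inv_of_mul_eq_one_left h, ← inv_pow, mul_inv_rev, cs.inv_simple, cs.inv_simple]
  rw [List.getElem_reverse]
  simp [hinv, pow_succ, mul_assoc]

theorem nodup_leftInvSeq_altList {i j : B} (hm : M i j ≠ 0) :
    (cs.leftInvSeq (altList i j (M i j))).Nodup := by
  rw [leftInvSeq_altList]
  refine List.Nodup.map_on (fun k hk l hl hkl => ?_) List.nodup_range
  rw [List.mem_range, ← orderOf_simple_mul_simple cs hm] at hk hl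
  exact pow_injOn_Iio_orderOf hk hl (mul_right_cancel hkl)

theorem wordProd_altList_swap (i j : B) :
    cs.wordProd (altList j i (M i j)) = cs.wordProd (altList i j (M i j)) := by
  have h := cs.wordProd_braidWord_eq i j
  rw [CoxeterSystem.braidWord, CoxeterSystem.braidWord, M.symmetric j i] at h
  rw [altList_eq_reverse_alternatingWord, altList_eq_reverse_alternatingWord,
    cs.wordProd_reverse, cs.wordProd_reverse, h]

end AlternatingWords

section InversionParity

theorem count_map_conj {G : Type*} [Group G] (g t : G) (L : List G) :
    (L.map (MulAut.conj g)).count t = L.count (g⁻¹ * t * g) := by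
  rw [← List.count_map_of_injective L _ (MulAut.conj g).injective, MulAut.conj_apply]
  group

variable {B W : Type*} [Group W] {M : CoxeterMatrix B} (cs : CoxeterSystem M W)

theorem involutive_simple_conj_flip (i : B) : Function.Involutive fun p : W × ZMod 2 =>
    (cs.simple i * p.1 * cs.simple i, p.2 + if p.1 = cs.simple i then 1 else 0) := by
  rintro ⟨t, e⟩
  have ht : cs.simple i * t * cs.simple i = cs.simple i ↔ t = cs.simple i := by
    rw [mul_eq_right, mul_eq_one_iff_inv_eq, cs.inv_simple, eq_comm]
  ext
  · simp [mul_assoc]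
  · simp only [ht, add_assoc, CharTwo.add_self_eq_zero, add_zero]

/-- The action of a simple reflection on pairs of a group element and a sign: the element is
conjugated and the sign flips exactly at the simple reflection itself. These involutions satisfy the
Coxeter relations, which is why inversions of group elements can be counted modulo `2`. -/
noncomputable def inversionFlip (i : B) : Equiv.Perm (W × ZMod 2) :=
  (involutive_simple_conj_flip cs i).toPerm

theorem inv_prod_inversionFlip_apply (ω : List B) (t : W) (e : ZMod 2) :
    (ω.map (inversionFlip cs)).prod⁻¹ (t, e) =
      ((cs.wordProd ω)⁻¹ * t * cs.wordProd ω, e + (cs.leftInvSeq ω).count t) := by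
  induction ω generalizing t e with
  | nil => simp
  | cons i ω ih =>
    have hinv : (inversionFlip cs i)⁻¹ (t, e) =
        (cs.simple i * t * cs.simple i, e + if t = cs.simple i then 1 else 0) := rfl
    rw [List.map_cons, List.prod_cons, mul_inv_rev, Equiv.Perm.mul_apply, hinv, ih,
      CoxeterSystem.leftInvSeq, List.count_cons, count_map_conj, cs.inv_simple,
      cs.wordProd_cons]
    ext
    · simp [mul_assoc]
    · simp only [beq_iff_eq, eq_comm (a := t)]
      push_cast
      ring

theorem isLiftable_inversionFlip : M.IsLiftable (inversionFlip cs) := by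
  intro i j
  rw [← prod_map_altList_two_mul, ← inv_eq_one]
  ext1 ⟨t, e⟩
  have hprod : cs.wordProd (altList i j (2 * M i j)) = 1 := by
    rw [CoxeterSystem.wordProd, prod_map_altList_two_mul, cs.simple_mul_simple_pow]
  have hperiod : (cs.leftInvSeq (altList i j (2 * M i j))).count t =
      2 * (cs.leftInvSeq (altList i j (M i j))).count t := by
    simp [leftInvSeq_altList, two_mul, List.range_add, pow_add, Function.comp_def]
  rw [inv_prod_inversionFlip_apply, hprod, hperiod]
  simp [CharTwo.two_eq_zero]

/-- The parity `η(w, t)` of the number of occurrences of `t` in the inversion sequence of a word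
representing `w`; by `inversionParity_wordProd` it does not depend on the word. -/
noncomputable def inversionParity (w t : W) : ZMod 2 :=
  ((cs.lift ⟨inversionFlip cs, isLiftable_inversionFlip cs⟩ w)⁻¹ (t, 0)).2

theorem inversionParity_wordProd (ω : List B) (t : W) :
    inversionParity cs (cs.wordProd ω) t = (cs.leftInvSeq ω).count t := by
  have hlift : cs.lift ⟨inversionFlip cs, isLiftable_inversionFlip cs⟩ (cs.wordProd ω) =
      (ω.map (inversionFlip cs)).prod := by
    simp [CoxeterSystem.wordProd, map_list_prod, Function.comp_def]
  rw [inversionParity, hlift, inv_prod_inversionFlip_apply, zero_add]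

theorem inversionParity_simple (i : B) (t : W) :
    inversionParity cs (cs.simple i) t = if t = cs.simple i then 1 else 0 := by
  rw [← cs.wordProd_singleton, inversionParity_wordProd, cs.leftInvSeq_singleton,
    List.count_singleton, cs.wordProd_singleton]
  simp only [beq_iff_eq, Nat.cast_ite, Nat.cast_one, Nat.cast_zero, eq_comm (a := t)]

theorem inversionParity_mul (x y t : W) :
    inversionParity cs (x * y) t = inversionParity cs x t + inversionParity cs y (x⁻¹ * t * x) := by
  obtain ⟨ω, rfl⟩ := cs.wordProd_surjective x
  obtain ⟨ω', rfl⟩ := cs.wordProd_surjective y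
  rw [← cs.wordProd_append]
  simp only [inversionParity_wordProd, leftInvSeq_append, List.count_append, count_map_conj,
    Nat.cast_add]

theorem mem_leftInvSeq_of_inversionParity_ne_zero {ω : List B} {t : W}
    (h : inversionParity cs (cs.wordProd ω) t ≠ 0) : t ∈ cs.leftInvSeq ω := by
  contrapose! h
  rw [inversionParity_wordProd, List.count_eq_zero_of_not_mem h, Nat.cast_zero]

theorem length_mul_lt_of_inversionParity_ne_zero {w t : W} (h : inversionParity cs w t ≠ 0) :
    cs.length (t * w) < cs.length w := by
  obtain ⟨ω, hω, rfl⟩ := cs.exists_isReduced w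
  exact (cs.isLeftInversion_of_mem_leftInvSeq hω
    (mem_leftInvSeq_of_inversionParity_ne_zero cs h)).2

end InversionParity

section Parabolic

open Pointwise

theorem mem_conj_smul_iff {G : Type*} [Group G] {H : Subgroup G} {g x : G} :
    x ∈ MulAut.conj g • H ↔ g⁻¹ * x * g ∈ H := by
  rw [Subgroup.mem_pointwise_smul_iff_inv_smul_mem, ← map_inv, MulAut.smul_def,
    MulAut.conj_apply, inv_inv]

variable {B W : Type*} [Group W] {M : CoxeterMatrix B} (cs : CoxeterSystem M W)

/-- The standard parabolic subgroup `W_I` generated by the simple reflections in `I`. -/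
def parabolic (I : Set B) : Subgroup W :=
  Subgroup.closure (cs.simple '' I)

theorem simple_mem_parabolic {I : Set B} {i : B} (hi : i ∈ I) : cs.simple i ∈ parabolic cs I :=
  Subgroup.subset_closure (Set.mem_image_of_mem _ hi)

theorem exists_wordProd_eq_of_mem_parabolic {I : Set B} {x : W} (hx : x ∈ parabolic cs I) :
    ∃ ω : List B, (∀ i ∈ ω, i ∈ I) ∧ cs.wordProd ω = x := by
  induction hx using Subgroup.closure_induction with
  | mem x hx =>
    obtain ⟨i, hi, rfl⟩ := hx
    exact ⟨[i], by simpa using hi, cs.wordProd_singleton i⟩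
  | one => exact ⟨[], by simp, cs.wordProd_nil⟩
  | mul x y _ _ hx hy =>
    obtain ⟨ω, hω, rfl⟩ := hx
    obtain ⟨ω', hω', rfl⟩ := hy
    exact ⟨ω ++ ω', fun i hi => (List.mem_append.1 hi).elim (hω i) (hω' i),
      cs.wordProd_append ω ω'⟩
  | inv x _ hx =>
    obtain ⟨ω, hω, rfl⟩ := hx
    exact ⟨ω.reverse, by simpa using hω, cs.wordProd_reverse ω⟩

theorem mem_parabolic_of_mem_leftInvSeq {I : Set B} {ω : List B} (hω : ∀ i ∈ ω, i ∈ I) {t : W}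
    (ht : t ∈ cs.leftInvSeq ω) : t ∈ parabolic cs I := by
  induction ω generalizing t with
  | nil => simp at ht
  | cons i ω ih =>
    have hi := simple_mem_parabolic cs (hω i List.mem_cons_self)
    rw [CoxeterSystem.leftInvSeq, List.mem_cons, List.mem_map] at ht
    rcases ht with rfl | ⟨u, hu, rfl⟩
    · exact hi
    · exact mul_mem (mul_mem hi (ih (fun j hj => hω j (List.mem_cons_of_mem _ hj)) hu))
        (inv_mem hi)

theorem mem_parabolic_of_inversionParity_ne_zero {I : Set B} {x t : W} (hx : x ∈ parabolic cs I)
    (h : inversionParity cs x t ≠ 0) : t ∈ parabolic cs I := by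
  obtain ⟨ω, hω, rfl⟩ := exists_wordProd_eq_of_mem_parabolic cs hx
  exact mem_parabolic_of_mem_leftInvSeq cs hω (mem_leftInvSeq_of_inversionParity_ne_zero cs h)

theorem exists_inversionParity_simple_ne_zero_of_word {I : Set B} {ω : List B}
    (hω : ∀ i ∈ ω, i ∈ I) (h1 : cs.wordProd ω ≠ 1) :
    ∃ i ∈ I, inversionParity cs (cs.wordProd ω) (cs.simple i) ≠ 0 := by
  induction hn : ω.length using Nat.strong_induction_on generalizing ω with
  | _ n ih =>
    cases ω with
    | nil => simp at h1
    | cons i ω =>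
      by_cases hi : inversionParity cs (cs.wordProd (i :: ω)) (cs.simple i) = 0
      · have hmem : cs.simple i ∈ cs.leftInvSeq ω := by
          refine mem_leftInvSeq_of_inversionParity_ne_zero cs fun h => ?_
          rw [cs.wordProd_cons, inversionParity_mul, inversionParity_simple, inv_mul_cancel,
            one_mul, h] at hi
          simp at hi
        obtain ⟨j, hj, hji⟩ := List.mem_iff_getElem.1 hmem
        have hdel : cs.wordProd (i :: ω) = cs.wordProd (ω.eraseIdx j) := by
          rw [cs.wordProd_cons, ← hji, ← cs.getD_leftInvSeq_mul_wordProd,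
            List.getD_eq_getElem _ _ hj]
        rw [hdel] at h1 ⊢
        refine ih _ ?_ (fun a ha => hω a (List.mem_cons_of_mem _ (List.mem_of_mem_eraseIdx ha)))
          h1 rfl
        rw [← hn]
        exact Nat.lt_succ_of_le (List.length_eraseIdx_le ω j)
      · exact ⟨i, hω i List.mem_cons_self, hi⟩

theorem exists_inversionParity_simple_ne_zero {I : Set B} {x : W} (hx : x ∈ parabolic cs I)
    (h1 : x ≠ 1) : ∃ i ∈ I, inversionParity cs x (cs.simple i) ≠ 0 := by
  obtain ⟨ω, hω, rfl⟩ := exists_wordProd_eq_of_mem_parabolic cs hx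
  exact exists_inversionParity_simple_ne_zero_of_word cs hω h1

/-- `d` has minimal length in both cosets `W_I d` and `d W_J`; every double coset of `W_I` and `W_J`
has such a representative. -/
def IsDoubleCosetMinimal (I J : Set B) (d : W) : Prop :=
  (∀ x ∈ parabolic cs I, cs.length d ≤ cs.length (x * d)) ∧
    ∀ y ∈ parabolic cs J, cs.length d ≤ cs.length (d * y)

variable {cs} {I J : Set B} {d x : W}

theorem ne_one_of_isReflection (hx : cs.IsReflection x) : x ≠ 1 := by
  rintro rfl
  simpa using hx.odd_length

-- Expand the parity of `x * d = d * (d⁻¹ * x * d)` in both ways: minimality of `d` makes the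
-- contributions of `d` vanish at elements of either parabolic subgroup.
theorem IsDoubleCosetMinimal.inversionParity_conj (hd : IsDoubleCosetMinimal cs I J d)
    (hx : x ∈ parabolic cs I) (hxJ : d⁻¹ * x * d ∈ parabolic cs J) (t : W) :
    inversionParity cs (d⁻¹ * x * d) (d⁻¹ * t * d) = inversionParity cs x t := by
  have hdI {u : W} (hu : u ∈ parabolic cs I) : inversionParity cs d u = 0 := by
    by_contra h
    exact (length_mul_lt_of_inversionParity_ne_zero cs h).not_ge (hd.1 u hu)
  have hdJ {u : W} (hu : d⁻¹ * u * d ∈ parabolic cs J) : inversionParity cs d u = 0 := by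
    by_contra h
    refine (length_mul_lt_of_inversionParity_ne_zero cs h).not_ge ?_
    simpa [mul_assoc] using hd.2 _ hu
  have hcocycle : inversionParity cs x t + inversionParity cs d (x⁻¹ * t * x) =
      inversionParity cs d t + inversionParity cs (d⁻¹ * x * d) (d⁻¹ * t * d) := by
    rw [← inversionParity_mul, ← inversionParity_mul]
    congr 1
    group
  by_cases htI : t ∈ parabolic cs I
  · rw [hdI htI, hdI (mul_mem (mul_mem (inv_mem hx) htI) hx)] at hcocycle
    simpa using hcocycle.symm
  by_cases htJ : d⁻¹ * t * d ∈ parabolic cs J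
  · have hconj : d⁻¹ * (x⁻¹ * t * x) * d ∈ parabolic cs J := by
      have := mul_mem (mul_mem (inv_mem hxJ) htJ) hxJ
      convert this using 1
      group
    rw [hdJ htJ, hdJ hconj] at hcocycle
    simpa using hcocycle.symm
  · have hηI : inversionParity cs x t = 0 :=
      of_not_not (mt (mem_parabolic_of_inversionParity_ne_zero cs hx) htI)
    have hηJ : inversionParity cs (d⁻¹ * x * d) (d⁻¹ * t * d) = 0 :=
      of_not_not (mt (mem_parabolic_of_inversionParity_ne_zero cs hxJ) htJ)
    rw [hηI, hηJ]

theorem IsDoubleCosetMinimal.exists_simple_conj_mem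
    (hd : IsDoubleCosetMinimal cs I J d) (hx : x ∈ parabolic cs I)
    (hxJ : d⁻¹ * x * d ∈ parabolic cs J) (h1 : x ≠ 1) :
    ∃ i ∈ I, inversionParity cs x (cs.simple i) ≠ 0 ∧
      d⁻¹ * cs.simple i * d ∈ cs.simple '' J := by
  obtain ⟨i, hi, hηi⟩ := exists_inversionParity_simple_ne_zero cs hx h1
  have hiJ : d⁻¹ * cs.simple i * d ∈ parabolic cs J := by
    rw [← hd.inversionParity_conj hx hxJ] at hηi
    exact mem_parabolic_of_inversionParity_ne_zero cs hxJ hηi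
  have hne : d⁻¹ * cs.simple i * d ≠ 1 := by
    rw [Ne, mul_eq_one_iff_eq_inv, mul_eq_left]
    exact ne_one_of_isReflection (cs.isReflection_simple i)
  obtain ⟨a, ha, hηa⟩ := exists_inversionParity_simple_ne_zero cs hiJ hne
  refine ⟨i, hi, hηi, a, ha, ?_⟩
  have hconj := hd.inversionParity_conj (simple_mem_parabolic cs hi) hiJ
    (d * cs.simple a * d⁻¹)
  rw [show d⁻¹ * (d * cs.simple a * d⁻¹) * d = cs.simple a by group,
    inversionParity_simple] at hconj
  have hai : d * cs.simple a * d⁻¹ = cs.simple i := by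
    by_contra h
    rw [hconj, if_neg h] at hηa
    exact hηa rfl
  rw [← hai]
  group

-- Kilmoyer's theorem, by descent on the length of an element of the intersection.
theorem IsDoubleCosetMinimal.parabolic_inf_conj_smul (hd : IsDoubleCosetMinimal cs I J d) :
    parabolic cs I ⊓ MulAut.conj d • parabolic cs J =
      parabolic cs {i ∈ I | d⁻¹ * cs.simple i * d ∈ cs.simple '' J} := by
  apply le_antisymm
  · rintro x ⟨hx, hxJ⟩
    induction hn : cs.length x using Nat.strong_induction_on generalizing x with
    | _ n ih =>
      rcases eq_or_ne x 1 with rfl | h1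
      · exact one_mem _
      obtain ⟨i, hi, hη, hiJ⟩ :=
        hd.exists_simple_conj_mem hx (mem_conj_smul_iff.1 hxJ) h1
      have hlt := hn ▸ length_mul_lt_of_inversionParity_ne_zero cs hη
      have hiJ' : cs.simple i ∈ MulAut.conj d • parabolic cs J :=
        mem_conj_smul_iff.2 (Subgroup.subset_closure hiJ)
      have hiK := simple_mem_parabolic cs
        (I := {i ∈ I | d⁻¹ * cs.simple i * d ∈ cs.simple '' J}) ⟨hi, hiJ⟩
      exact (Subgroup.mul_mem_cancel_left _ hiK).1
        (ih _ hlt (mul_mem (simple_mem_parabolic cs hi) hx) (mul_mem hiJ' hxJ) rfl)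
  · rw [parabolic, Subgroup.closure_le]
    rintro _ ⟨i, ⟨hi, hiJ⟩, rfl⟩
    exact ⟨simple_mem_parabolic cs hi, mem_conj_smul_iff.2 (Subgroup.subset_closure hiJ)⟩

variable (cs) in
theorem exists_isDoubleCosetMinimal (I J : Set B) (α β : W) :
    ∃ α' β', MulAut.conj α' • parabolic cs I = MulAut.conj α • parabolic cs I ∧
      MulAut.conj β' • parabolic cs J = MulAut.conj β • parabolic cs J ∧
      IsDoubleCosetMinimal cs I J (α'⁻¹ * β') := by
  obtain ⟨⟨p, q⟩, -, hmin⟩ := exists_minimalFor_of_wellFoundedLT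
    (fun _ : parabolic cs I × parabolic cs J => True)
    (fun r => cs.length (r.1 * (α⁻¹ * β) * r.2)) ⟨1, trivial⟩
  have hle (p' : parabolic cs I) (q' : parabolic cs J) :
      cs.length (p * (α⁻¹ * β) * q) ≤ cs.length (p' * (α⁻¹ * β) * q') :=
    (le_total _ _).elim id fun h => hmin (j := (p', q')) trivial h
  refine ⟨α * (p : W)⁻¹, β * q, ?_, ?_, fun x hx => ?_, fun y hy => ?_⟩
  · rw [map_mul, mul_smul, Subgroup.conj_smul_eq_self_of_mem (inv_mem p.2)]
  · rw [map_mul, mul_smul, Subgroup.conj_smul_eq_self_of_mem q.2]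
  · simpa [mul_assoc] using hle (⟨x, hx⟩ * p) q
  · simpa [mul_assoc] using hle p (q * ⟨y, hy⟩)

end Parabolic

section RankTwo

open Pointwise

variable {B W : Type*} [Group W] {M : CoxeterMatrix B} {cs : CoxeterSystem M W}

theorem SimConj.trans {p q r : B × B} : SimConj cs p q → SimConj cs q r → SimConj cs p r := by
  rintro ⟨w, h₁, h₂⟩ ⟨w', h₁', h₂'⟩
  exact ⟨w' * w, by rw [← h₁', ← h₁]; group, by rw [← h₂', ← h₂]; group⟩

theorem SimConj.swap {p q : B × B} : SimConj cs p q → SimConj cs p.swap q.swap :=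
  fun ⟨w, h₁, h₂⟩ => ⟨w, h₂, h₁⟩

variable (cs) in
/-- The pair `p` has color `[q]` or the opposite color `[q]ᵒᵖ`. -/
def SimConjUpToSwap (p q : B × B) : Prop :=
  SimConj cs p q ∨ SimConj cs p q.swap

theorem SimConjUpToSwap.trans {p q r : B × B} :
    SimConjUpToSwap cs p q → SimConjUpToSwap cs q r → SimConjUpToSwap cs p r
  | .inl h, .inl h' => .inl (h.trans h')
  | .inl h, .inr h' => .inr (h.trans h')
  | .inr h, .inl h' => .inr (h.trans h'.swap)
  | .inr h, .inr h' => .inl (h.trans h'.swap)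

theorem conj_smul_parabolic_pair {i j a b : B} {q : W} (hi : q * cs.simple i * q⁻¹ = cs.simple a)
    (hj : q * cs.simple j * q⁻¹ = cs.simple b) :
    MulAut.conj q • parabolic cs {i, j} = parabolic cs {a, b} := by
  rw [parabolic, parabolic, Subgroup.smul_closure, Set.image_pair, Set.image_pair,
    ← Set.image_smul, Set.image_pair, ← hi, ← hj]
  rfl

theorem eq_of_mem_parabolic_of_subsingleton {I : Set B} (hI : (cs.simple '' I).Subsingleton)
    {x y : W} (hx : x ∈ parabolic cs I) (hy : y ∈ parabolic cs I) (hx1 : x ≠ 1) (hy1 : y ≠ 1) :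
    x = y := by
  rw [parabolic] at hx hy
  rcases hI.eq_empty_or_singleton with hI | ⟨r, hI⟩
  · rw [hI, Subgroup.closure_empty, Subgroup.mem_bot] at hx
    exact absurd hx hx1
  obtain ⟨i, -, rfl⟩ : r ∈ cs.simple '' I := hI ▸ Set.mem_singleton r
  have eq_simple {z : W} (hz : z ∈ Subgroup.closure {cs.simple i}) (hz1 : z ≠ 1) :
      z = cs.simple i := by
    obtain ⟨n, rfl⟩ := Subgroup.mem_closure_singleton.1 hz
    rcases Int.even_or_odd' n with ⟨m, rfl | rfl⟩
    · simp [zpow_mul] at hz1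
    · simp [zpow_add, zpow_mul]
  rw [hI] at hx hy
  rw [eq_simple hx hx1, eq_simple hy hy1]

theorem IsDoubleCosetMinimal.conj_simple_pair {i j a b : B} {d x y : W}
    (hd : IsDoubleCosetMinimal cs {i, j} {a, b} d)
    (hx : x ∈ parabolic cs {i, j} ⊓ MulAut.conj d • parabolic cs {a, b})
    (hy : y ∈ parabolic cs {i, j} ⊓ MulAut.conj d • parabolic cs {a, b})
    (hx1 : x ≠ 1) (hy1 : y ≠ 1) (hxy : x ≠ y) :
    (d⁻¹ * cs.simple i * d = cs.simple a ∧ d⁻¹ * cs.simple j * d = cs.simple b) ∨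
      (d⁻¹ * cs.simple i * d = cs.simple b ∧ d⁻¹ * cs.simple j * d = cs.simple a) := by
  rw [hd.parabolic_inf_conj_smul] at hx hy
  have hK := mt (eq_of_mem_parabolic_of_subsingleton · hx hy hx1 hy1) hxy
  obtain ⟨_, ⟨k, ⟨hk, c, hc, hkc⟩, rfl⟩, _, ⟨l, ⟨hl, e, he, hle⟩, rfl⟩, hkl⟩ :=
    Set.not_subsingleton_iff.1 hK
  have hce : cs.simple c ≠ cs.simple e := by
    rw [hkc, hle]
    simpa using hkl
  simp only [Set.mem_insert_iff, Set.mem_singleton_iff] at hk hl hc he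
  rcases hk with rfl | rfl <;> rcases hl with rfl | rfl <;> rcases hc with rfl | rfl <;>
    rcases he with rfl | rfl <;> simp_all

theorem simConjUpToSwap_and_conj_smul_parabolic_eq {i j a b : B} {α β x y : W}
    (hx : x ∈ MulAut.conj α • parabolic cs {i, j} ⊓ MulAut.conj β • parabolic cs {a, b})
    (hy : y ∈ MulAut.conj α • parabolic cs {i, j} ⊓ MulAut.conj β • parabolic cs {a, b})
    (hx1 : x ≠ 1) (hy1 : y ≠ 1) (hxy : x ≠ y) :
    SimConjUpToSwap cs (i, j) (a, b) ∧
      MulAut.conj α • parabolic cs {i, j} = MulAut.conj β • parabolic cs {a, b} := by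
  obtain ⟨α', β', hα, hβ, hd⟩ := exists_isDoubleCosetMinimal cs {i, j} {a, b} α β
  have hβ' : β' = α' * (α'⁻¹ * β') := by group
  set d := α'⁻¹ * β'
  rw [← hα, ← hβ, hβ', map_mul, mul_smul] at hx hy ⊢
  rw [← Subgroup.smul_inf, Subgroup.mem_pointwise_smul_iff_inv_smul_mem] at hx hy
  have hconj := hd.conj_simple_pair hx hy
    ((MulEquiv.map_ne_one_iff (MulAut.conj α')⁻¹).2 hx1)
    ((MulEquiv.map_ne_one_iff (MulAut.conj α')⁻¹).2 hy1) (by simpa using hxy)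
  have hsmul : MulAut.conj d⁻¹ • parabolic cs {i, j} = parabolic cs {a, b} := by
    rcases hconj with h | h
    · exact conj_smul_parabolic_pair (by simpa using h.1) (by simpa using h.2)
    · rw [Set.pair_comm a b]
      exact conj_smul_parabolic_pair (by simpa using h.1) (by simpa using h.2)
  refine ⟨?_, ?_⟩
  · exact hconj.imp (fun h => ⟨d⁻¹, by simpa using h⟩) fun h => ⟨d⁻¹, by simpa using h⟩
  · rw [← hsmul, map_inv, smul_inv_smul]

end RankTwo

section BraidMoves

open Pointwise

variable {B W : Type*} [Group W] {M : CoxeterMatrix B} {cs : CoxeterSystem M W}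

theorem simple_mul_zpow_simple_mul_simple (i j : B) (k : ℤ) :
    cs.simple i * (cs.simple i * cs.simple j) ^ k =
      (cs.simple i * cs.simple j) ^ (-k) * cs.simple i := by
  have h : SemiconjBy (cs.simple i) (cs.simple i * cs.simple j) (cs.simple i * cs.simple j)⁻¹ := by
    simp [SemiconjBy, mul_assoc]
  rw [zpow_neg, ← inv_zpow]
  exact h.zpow_right k

theorem exists_zpow_of_mem_parabolic_pair {i j : B} {x : W} (hx : x ∈ parabolic cs {i, j}) :
    ∃ k : ℤ, x = (cs.simple i * cs.simple j) ^ k ∨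
      x = (cs.simple i * cs.simple j) ^ k * cs.simple i := by
  obtain ⟨ω, hω, rfl⟩ := exists_wordProd_eq_of_mem_parabolic cs hx
  clear hx
  induction ω with
  | nil => exact ⟨0, .inl (by simp)⟩
  | cons l ω ih =>
    obtain ⟨k, hk⟩ := ih fun a ha => hω a (List.mem_cons_of_mem _ ha)
    have hi : cs.simple i * cs.wordProd ω = (cs.simple i * cs.simple j) ^ (-k) ∨
        cs.simple i * cs.wordProd ω = (cs.simple i * cs.simple j) ^ (-k) * cs.simple i := by
      rcases hk with hk | hk <;>
        simp [hk, ← mul_assoc, simple_mul_zpow_simple_mul_simple]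
    have hj : cs.simple j = (cs.simple i * cs.simple j) ^ (-1 : ℤ) * cs.simple i := by
      simp [mul_assoc]
    rw [cs.wordProd_cons]
    rcases hω l List.mem_cons_self with rfl | rfl
    · exact ⟨-k, hi⟩
    · refine ⟨-1 + -k, ?_⟩
      rw [zpow_add, hj, mul_assoc, mul_assoc, ← hj]
      exact hi.imp (congrArg _) (congrArg _)

theorem exists_zpow_of_isReflection_of_mem_parabolic_pair {i j : B} {x : W}
    (hx : cs.IsReflection x) (hxP : x ∈ parabolic cs {i, j}) :
    ∃ k : ℤ, x = (cs.simple i * cs.simple j) ^ k * cs.simple i := by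
  obtain ⟨k, rfl | hk⟩ := exists_zpow_of_mem_parabolic_pair hxP
  · have hsq : cs.lengthParity (cs.simple i * cs.simple j) = 1 := by
      rw [map_mul, cs.lengthParity_simple, cs.lengthParity_simple]
      rfl
    have hodd : cs.lengthParity ((cs.simple i * cs.simple j) ^ k) = Multiplicative.ofAdd 1 := by
      rw [cs.lengthParity_eq_ofAdd_length, (ZMod.natCast_eq_one_iff_odd).2 hx.odd_length]
    rw [map_zpow, hsq, one_zpow] at hodd
    exact absurd hodd (by decide)
  · exact ⟨k, hk⟩

theorem mem_leftInvSeq_altList_iff {i j : B} (hm : M i j ≠ 0) {x : W} :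
    x ∈ cs.leftInvSeq (altList i j (M i j)) ↔
      cs.IsReflection x ∧ x ∈ parabolic cs {i, j} := by
  refine ⟨fun h => ⟨cs.isReflection_of_mem_leftInvSeq _ h,
    mem_parabolic_of_mem_leftInvSeq cs (fun _ => mem_pair_of_mem_altList) h⟩, ?_⟩
  rintro ⟨hx, hxP⟩
  obtain ⟨k, rfl⟩ := exists_zpow_of_isReflection_of_mem_parabolic_pair hx hxP
  have hmz : (M i j : ℤ) ≠ 0 := Int.natCast_ne_zero.2 hm
  obtain ⟨n, hn⟩ := Int.eq_ofNat_of_zero_le (Int.emod_nonneg k hmz)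
  have hlt := Int.emod_lt_of_pos k (Int.natCast_pos.2 (Nat.pos_of_ne_zero hm))
  rw [leftInvSeq_altList, List.mem_map]
  refine ⟨n, List.mem_range.2 (by omega), ?_⟩
  rw [← zpow_mod_orderOf, orderOf_simple_mul_simple cs hm, hn, zpow_natCast]

theorem IsBraidMove.exists_leftInvSeq_reverse {i j : B} {a b : List B}
    (h : IsBraidMove cs i j a b) :
    ∃ (α : W) (A F C : List W), cs.leftInvSeq a = A ++ F ++ C ∧
      cs.leftInvSeq b = A ++ F.reverse ++ C ∧ F.Nodup ∧ 2 ≤ F.length ∧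
      ∀ x, x ∈ F ↔ cs.IsReflection x ∧ x ∈ MulAut.conj α • parabolic cs {i, j} := by
  obtain ⟨hij, hm, p, -, ha, hb⟩ := h
  generalize a.take p = P at ha hb
  generalize a.drop (p + M.M i j) = Q at ha hb
  subst ha hb
  refine ⟨cs.wordProd P, cs.leftInvSeq P,
    (cs.leftInvSeq (altList i j (M i j))).map (MulAut.conj (cs.wordProd P)),
    (cs.leftInvSeq Q).map (MulAut.conj (cs.wordProd (P ++ altList i j (M i j)))),
    ?_, ?_, ?_, ?_, fun x => ?_⟩
  · rw [leftInvSeq_append, leftInvSeq_append]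
  · rw [← List.map_reverse, ← leftInvSeq_altList_swap, cs.wordProd_append,
      ← wordProd_altList_swap, ← cs.wordProd_append, leftInvSeq_append, leftInvSeq_append]
  · exact (nodup_leftInvSeq_altList cs hm).map (MulEquiv.injective _)
  · have h1 : M i j ≠ 1 := M.off_diagonal i j hij
    rw [List.length_map, leftInvSeq_altList, List.length_map, List.length_range]
    exact (Nat.two_le_iff _).2 ⟨hm, h1⟩
  · rw [List.mem_map, mem_conj_smul_iff, ← cs.isReflection_conj_iff (cs.wordProd P)⁻¹, inv_inv,
      ← mem_leftInvSeq_altList_iff hm]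
    refine ⟨?_, fun hx => ⟨_, hx, by simp [mul_assoc]⟩⟩
    rintro ⟨y, hy, rfl⟩
    simpa [mul_assoc] using hy

theorem IsBraidMove.exists_pairCount_leftInvSeq {i j : B} {a b : List B}
    (h : IsBraidMove cs i j a b) :
    ∃ α : W, (∃ u v, u ≠ v ∧ cs.IsReflection u ∧ cs.IsReflection v ∧
        u ∈ MulAut.conj α • parabolic cs {i, j} ∧ v ∈ MulAut.conj α • parabolic cs {i, j}) ∧
      ∀ u v, u ≠ v → cs.IsReflection u → cs.IsReflection v →
        (pairCount u v (cs.leftInvSeq b) : ZMod 2) = pairCount u v (cs.leftInvSeq a) +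
          if u ∈ MulAut.conj α • parabolic cs {i, j} ∧ v ∈ MulAut.conj α • parabolic cs {i, j}
          then 1 else 0 := by
  obtain ⟨α, A, F, C, ha, hb, hF, hlen, hmem⟩ := h.exists_leftInvSeq_reverse
  have hmem0 := (hmem F[0]).1 (List.getElem_mem _)
  have hmem1 := (hmem F[1]).1 (List.getElem_mem _)
  refine ⟨α, ⟨F[0], F[1], fun h => ?_, hmem0.1, hmem1.1, hmem0.2, hmem1.2⟩, ?_⟩
  · exact absurd (hF.getElem_inj_iff.1 h) zero_ne_one
  · intro u v huv hu hv
    have hcount {x : W} (hx : cs.IsReflection x) :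
        F.count x = if x ∈ MulAut.conj α • parabolic cs {i, j} then 1 else 0 := by
      rw [hF.count]
      exact if_congr ((hmem x).trans (and_iff_right hx)) rfl rfl
    rw [ha, hb, pairCount_append_reverse_append huv, hcount hu, hcount hv, ite_and]
    split_ifs <;> simp

end BraidMoves

open Pointwise in
theorem cycle_color_even_general {B W : Type*} [Group W] {M : CoxeterMatrix B}
    (cs : CoxeterSystem M W) (k : ℕ) (c : ℕ → List B) (f g : ℕ → B) (hcyc : c k = c 0)
    (hmove : ∀ n < k, IsBraidMove cs (f n) (g n) (c n) (c (n + 1))) (s t : B) :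
    Even ((Finset.range k).filter
      (fun n => SimConj cs (f n, g n) (s, t) ∨ SimConj cs (f n, g n) (t, s))).card ∧
    Even k := by
  choose! α hpair hcount using fun n hn => (hmove n hn).exists_pairCount_leftInvSeq
  let D (n : ℕ) : Subgroup W := MulAut.conj (α n) • parabolic cs {f n, g n}
  have hfiber : ∀ n ∈ Finset.range k,
      Even ((Finset.range k).filter fun m => D m = D n).card := by
    intro n hn
    obtain ⟨u, v, huv, hu, hv, hun, hvn⟩ := hpair n (Finset.mem_range.1 hn)
    refine even_card_filter_of_telescope
      (a := fun m => (pairCount u v (cs.leftInvSeq (c m)) : ZMod 2)) (fun m hm => ?_)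
      (by simp only [hcyc])
    have hiff : u ∈ D m ∧ v ∈ D m ↔ D m = D n :=
      ⟨fun h => (simConjUpToSwap_and_conj_smul_parabolic_eq ⟨h.1, hun⟩ ⟨h.2, hvn⟩
        (ne_one_of_isReflection hu) (ne_one_of_isReflection hv) huv).2,
        fun h => h ▸ ⟨hun, hvn⟩⟩
    simp only [hcount m hm u v huv hu hv, ← hiff]
    rfl
  refine ⟨even_card_filter_of_even_card_fibers _ D hfiber _ fun m hm n _ hmn hQ => ?_, ?_⟩
  · obtain ⟨u, v, huv, hu, hv, hum, hvm⟩ := hpair m (Finset.mem_range.1 hm)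
    have hun : u ∈ D n := hmn ▸ hum
    have hvn : v ∈ D n := hmn ▸ hvm
    have hcolor : SimConjUpToSwap cs (f m, g m) (f n, g n) :=
      (simConjUpToSwap_and_conj_smul_parabolic_eq ⟨hum, hun⟩ ⟨hvm, hvn⟩
        (ne_one_of_isReflection hu) (ne_one_of_isReflection hv) huv).1
    exact hcolor.trans hQ
  · simpa using even_card_filter_of_even_card_fibers _ D hfiber (fun _ => True)
      fun _ _ _ _ _ _ => trivial

/-- Let `C` be a directed cycle `→c_0, …, →c_k = →c_0` in the graph
`R(w)`, the arc from `→c_n` to `→c_{n+1}` being an `(s_{f n}, s_{g n})`-braid move and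
colored by the simultaneous-conjugacy class `[(s_{f n}, s_{g n})]`. Fix a color
`c = [(s,t)]` with opposite `c^op = [(t,s)]`. Then the number of arcs of `C` whose color
lies in `{c, c^op}` is even; in particular, the cycle length `k` is even. -/
theorem cycle_color_even {B W : Type*} [Group W] {M : CoxeterMatrix B}
    (cs : CoxeterSystem M W) (w : W) (k : ℕ) (c : ℕ → List B) (f g : ℕ → B)
    (hred : ∀ n ≤ k, cs.IsReduced (c n) ∧ cs.wordProd (c n) = w)
    (hcyc : c k = c 0)
    (hmove : ∀ n < k, IsBraidMove cs (f n) (g n) (c n) (c (n + 1)))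
    (s t : B) (hst : s ≠ t) (hfin : M.M s t ≠ 0) :
    Even ((Finset.range k).filter
      (fun n => SimConj cs (f n, g n) (s, t) ∨ SimConj cs (f n, g n) (t, s))).card ∧
    Even k :=
  cycle_color_even_general cs k c f g hcyc hmove s t
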